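/- arXiv:1509.00776 — 6 statements merged into one kernel-verified Lean document; each statement's English description precedes it below -/
import Mathlib

section
/- Let α ∈ (0,1). If the root c₁ = 1/2 + √(12/α − 3)/6 of the quadratic 3αx² − 3αx + (α − 1) is a rational number, then there exist integers p > q ≥ 1 such that α = q²/(3p(p − q) + q²). -/
/-- The larger root `c₁ = 1/2 + √(12/α − 3)/6` of `3αx² − 3αx + (α − 1)`. -/
noncomputable def c1 (α : ℝ) : ℝ := 1/2 + Real.sqrt (12/α - 3)/6

theorem c1_quadratic_eq_zero {α : ℝ} (hα : 0 < α) (hα4 : α ≤ 4) :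
    3 * α * c1 α ^ 2 - 3 * α * c1 α + (α - 1) = 0 := by
  have hnonneg : 0 ≤ 12 / α - 3 := by
    rw [sub_nonneg, le_div_iff₀ hα]
    linarith
  have hsq : α * √(12 / α - 3) ^ 2 = 12 - 3 * α := by
    rw [Real.sq_sqrt hnonneg]
    field_simp
  rw [c1]
  linear_combination hsq / 12

-- For `α ≤ 0` the radicand is negative, so `√` takes its junk value `0` and `c1 α = 1/2`.
theorem one_lt_c1_iff {α : ℝ} : 1 < c1 α ↔ α ∈ Set.Ioo 0 1 :=
  calc 1 < c1 α
    _ ↔ 3 < √(12 / α - 3) := by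
        rw [c1]
        constructor <;> intro h <;> linarith
    _ ↔ 3 ^ 2 < 12 / α - 3 := Real.lt_sqrt zero_le_three
    _ ↔ 1 < α⁻¹ := by
        rw [div_eq_mul_inv]
        constructor <;> intro h <;> linarith
    _ ↔ α ∈ Set.Ioo 0 1 := one_lt_inv_iff₀

-- The quadratic is affine in `a`, so a root determines `a`.
theorem eq_div_of_quadratic_div_eq_zero {K : Type*} [Field K] {a p q : K} (hq : q ≠ 0)
    (h : 3 * a * (p / q) ^ 2 - 3 * a * (p / q) + (a - 1) = 0) :
    a = q ^ 2 / (3 * p * (p - q) + q ^ 2) := by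
  have hmul : a * (3 * p * (p - q) + q ^ 2) = q ^ 2 := by
    field_simp at h
    linear_combination h
  have hden : 3 * p * (p - q) + q ^ 2 ≠ 0 :=
    right_ne_zero_of_mul (hmul ▸ pow_ne_zero 2 hq)
  exact eq_div_of_mul_eq hden hmul

/-- If `α ∈ (0,1)` and the root `c₁` is rational, then
`α = q²/(3p(p − q) + q²)` for some integers `p > q ≥ 1`. -/
theorem alpha_form_of_c1_rational (α : ℝ) (hα : α ∈ Set.Ioo (0:ℝ) 1)
    (h : ∃ r : ℚ, (r : ℝ) = c1 α) :
    ∃ p q : ℤ, p > q ∧ 1 ≤ q ∧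
      α = (q : ℝ)^2 / (3 * (p : ℝ) * ((p : ℝ) - (q : ℝ)) + (q : ℝ)^2) := by
  obtain ⟨r, hr⟩ := h
  have hden : (0 : ℝ) < (r.den : ℤ) := by exact_mod_cast r.den_pos
  have hc1 : c1 α = (r.num : ℝ) / (r.den : ℤ) := by
    rw [← hr, Rat.cast_def, Int.cast_natCast]
  have hlt : (1 : ℝ) < r.num / (r.den : ℤ) := hc1 ▸ one_lt_c1_iff.mpr hα
  have hroot := c1_quadratic_eq_zero hα.1 (by linarith [hα.2])
  rw [hc1] at hroot
  refine ⟨r.num, r.den, ?_, ?_, eq_div_of_quadratic_div_eq_zero hden.ne' hroot⟩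
  · exact_mod_cast (one_lt_div hden).mp hlt
  · exact_mod_cast r.den_pos
end

section
/- For all integers p > q ≥ 1, every integer k ≥ 0, and every integer ℓ not divisible by 3, one has q²/(3p(p − q) + q²) ≠ ℓ/3^k. In other words, no rational number of the form ℓ/3^k with 3 ∤ ℓ can be written as q²/(3p(p − q) + q²) with integers p > q ≥ 1. -/
/-!
Write `α = q² / (r p (p - q) + q²)` for a prime `r`. Comparing `r`-adic absolute values of `p` and
`q` shows that `α` is `r`-integral: if `|p| ≤ |q|` then `q²` dominates the denominator, while if
`|q| < |p|` then even `|q| ≤ |p| / r`, so the denominator has absolute value `|p|² / r ≥ |q|²`.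
An `r`-integral number `ℓ / r ^ k` is an integer, but `0 < α < 1` once `q ≠ 0` and `p (p - q) > 0`.
-/

section Padic

variable {r : ℕ} [Fact r.Prime]

lemma prime_mul_padic_norm_le_of_lt {a b : ℚ_[r]} (h : ‖b‖ < ‖a‖) : r * ‖b‖ ≤ ‖a‖ := by
  have ha : 0 < ‖a‖ := (norm_nonneg b).trans_lt h
  have hr : (0 : ℝ) < r := by exact_mod_cast (Fact.out : r.Prime).pos
  have hquot : ‖b / a‖ ≤ (r : ℝ) ^ (-1 : ℤ) := by
    rw [Padic.norm_le_pow_iff_norm_lt_pow_add_one, norm_div]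
    simpa using (div_lt_one ha).2 h
  rw [norm_div, zpow_neg_one, div_le_iff₀ ha] at hquot
  exact (le_inv_mul_iff₀ hr).1 hquot

lemma padic_norm_prime_mul_ne_norm_sq (a : ℚ_[r]) {b : ℚ_[r]} (hb : b ≠ 0) :
    ‖r * a * (a - b)‖ ≠ ‖b ^ 2‖ := by
  have hr : (1 : ℝ) < r := by exact_mod_cast (Fact.out : r.Prime).one_lt
  have hfactor : ‖r * a * (a - b)‖ = (r : ℝ)⁻¹ * (‖a‖ * ‖a - b‖) := by
    rw [norm_mul, norm_mul, Padic.norm_p, mul_assoc]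
  rw [hfactor, norm_pow]
  rcases le_or_gt ‖a‖ ‖b‖ with hab | hba
  · have hsub : ‖a - b‖ ≤ ‖b‖ := by
      simpa [← sub_eq_add_neg, hab] using IsUltrametricDist.norm_add_le_max a (-b)
    refine ne_of_lt ?_
    calc (r : ℝ)⁻¹ * (‖a‖ * ‖a - b‖) ≤ (r : ℝ)⁻¹ * (‖b‖ * ‖b‖) := by gcongr
      _ < 1 * (‖b‖ * ‖b‖) := by gcongr; exact inv_lt_one_of_one_lt₀ hr
      _ = ‖b‖ ^ 2 := by ring
  · have hsub : ‖a - b‖ = ‖a‖ := by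
      have hne : ‖a‖ ≠ ‖-b‖ := by rw [norm_neg]; exact hba.ne'
      rw [sub_eq_add_neg, IsUltrametricDist.norm_add_eq_max_of_norm_ne_norm hne, norm_neg,
        max_eq_left hba.le]
    have hgap : r * ‖b‖ ≤ ‖a‖ := prime_mul_padic_norm_le_of_lt hba
    refine ne_of_gt ?_
    calc ‖b‖ ^ 2 < r * ‖b‖ ^ 2 := lt_mul_of_one_lt_left (by positivity) hr
      _ = (r : ℝ)⁻¹ * ((r * ‖b‖) * (r * ‖b‖)) := by field_simp
      _ ≤ (r : ℝ)⁻¹ * (‖a‖ * ‖a‖) := by gcongr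
      _ = (r : ℝ)⁻¹ * (‖a‖ * ‖a - b‖) := by rw [hsub]

lemma padic_norm_sq_le_norm_prime_mul_add_sq (a b : ℚ_[r]) :
    ‖b ^ 2‖ ≤ ‖r * a * (a - b) + b ^ 2‖ := by
  rcases eq_or_ne b 0 with rfl | hb
  · rw [zero_pow two_ne_zero, norm_zero]
    exact norm_nonneg _
  · rw [IsUltrametricDist.norm_add_eq_max_of_norm_ne_norm (padic_norm_prime_mul_ne_norm_sq a hb)]
    exact le_max_right _ _

lemma exists_int_eq_div_prime_zpow_of_padic_norm_le_one {ℓ k : ℤ}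
    (h : ‖((ℓ / (r : ℚ) ^ k : ℚ) : ℚ_[r])‖ ≤ 1) : ∃ m : ℤ, (ℓ / (r : ℚ) ^ k : ℚ) = m := by
  have hr : (0 : ℝ) < r := by exact_mod_cast (Fact.out : r.Prime).pos
  have hr' : (r : ℚ) ≠ 0 := by exact_mod_cast (Fact.out : r.Prime).ne_zero
  obtain ⟨n, rfl | rfl⟩ := k.eq_nat_or_neg
  · have hdvd : (r : ℤ) ^ n ∣ ℓ := by
      rw [← Padic.norm_int_le_pow_iff_dvd]
      push_cast at h
      rwa [norm_div, Padic.norm_p_zpow, div_le_one (zpow_pos hr _)] at h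
    obtain ⟨m, rfl⟩ := hdvd
    exact ⟨m, by push_cast; rw [zpow_natCast]; field_simp⟩
  · exact ⟨ℓ * r ^ n, by simp⟩

end Padic

theorem alpha_form_ne_ell_div_three_pow_general {r : ℕ} [Fact r.Prime] {p q : ℚ}
    (hpq : 0 < p * (p - q)) (hq : q ≠ 0) (k ℓ : ℤ) :
    q ^ 2 / (r * p * (p - q) + q ^ 2) ≠ ℓ / (r : ℚ) ^ k := by
  intro h
  have hr : (0 : ℚ) < r := by exact_mod_cast (Fact.out : r.Prime).pos
  have hq2 : 0 < q ^ 2 := by positivity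
  have hlt : q ^ 2 < r * p * (p - q) + q ^ 2 := by
    rw [mul_assoc]
    exact lt_add_of_pos_left _ (mul_pos hr hpq)
  have hint : ‖((q ^ 2 / (r * p * (p - q) + q ^ 2) : ℚ) : ℚ_[r])‖ ≤ 1 := by
    push_cast
    rw [norm_div]
    exact div_le_one_of_le₀ (padic_norm_sq_le_norm_prime_mul_add_sq _ _) (norm_nonneg _)
  obtain ⟨m, hm⟩ := exists_int_eq_div_prime_zpow_of_padic_norm_le_one (h ▸ hint)
  have hm_pos : (0 : ℚ) < m := by
    rw [← hm, ← h]
    exact div_pos hq2 (hq2.trans hlt)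
  have hm_lt : (m : ℚ) < 1 := by
    rw [← hm, ← h]
    exact (div_lt_one (hq2.trans hlt)).2 hlt
  norm_cast at hm_pos hm_lt
  omega

/-- For all integers `p > q ≥ 1`, every integer `k ≥ 0`, and every integer `ℓ` not
divisible by `3`, one has `q²/(3p(p − q) + q²) ≠ ℓ/3^k` (as rational numbers). -/
theorem alpha_form_ne_ell_div_three_pow (p q k ℓ : ℤ)
    (hpq : p > q) (hq : 1 ≤ q) (hk : 0 ≤ k) (hℓ : ¬ (3 ∣ ℓ)) :
    (q : ℚ)^2 / (3 * (p : ℚ) * ((p : ℚ) - (q : ℚ)) + (q : ℚ)^2) ≠ (ℓ : ℚ) / (3 : ℚ)^k := by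
  have hpos : 0 < p * (p - q) := mul_pos (by omega) (by omega)
  exact alpha_form_ne_ell_div_three_pow_general (r := 3) (by exact_mod_cast hpos)
    (by exact_mod_cast (by omega : q ≠ 0)) k ℓ
end

section
/- The set { q²/(3p(p − q) + q²) : p, q ∈ ℤ, p > q ≥ 1 } is dense in the interval [0, 1]. -/
/-! Dividing numerator and denominator by `p²` turns `q² / (3p(p - q) + q²)` into the function
`t² / (3(1 - t) + t²)` of `t = q / p`. It is continuous and takes the values `0` and `1` at the
endpoints of `[0, 1]`, so by the intermediate value theorem the image of `[0, 1]` contains `[0, 1]`.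
The rationals of `(0, 1)` are dense in `[0, 1]`, so the closure of their image contains it too. -/

open Set

theorem closure_inter_eq_of_isOpen_of_dense {X : Type*} [TopologicalSpace X] {U s : Set X}
    (hU : IsOpen U) (hs : Dense s) : closure (U ∩ s) = closure U :=
  (closure_mono inter_subset_left).antisymm
    (closure_minimal (hs.open_subset_closure_inter hU) isClosed_closure)

theorem Icc_subset_closure_image_Ioo_inter_of_dense {X Y : Type*}
    [ConditionallyCompleteLinearOrder X] [DenselyOrdered X] [TopologicalSpace X] [OrderTopology X]
    [LinearOrder Y] [TopologicalSpace Y] [OrderClosedTopology Y]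
    {f : X → Y} {a b : X} {s : Set X} (hab : a < b) (hf : ContinuousOn f (Icc a b))
    (hs : Dense s) :
    Icc (f a) (f b) ⊆ closure (f '' (Ioo a b ∩ s)) := by
  have closure_eq : closure (Ioo a b ∩ s) = Icc a b := by
    rw [closure_inter_eq_of_isOpen_of_dense isOpen_Ioo hs, closure_Ioo hab.ne]
  calc Icc (f a) (f b)
      ⊆ f '' Icc a b := intermediate_value_Icc hab.le hf
    _ = f '' closure (Ioo a b ∩ s) := by rw [closure_eq]
    _ ⊆ closure (f '' (Ioo a b ∩ s)) := (closure_eq ▸ hf).image_closure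

/-- The form `q² / (3p(p - q) + q²)` as a function of the ratio `t = q / p`, on which alone it
depends because it is homogeneous of degree `0`. -/
def alphaForm {K : Type*} [Field K] (t : K) : K :=
  t ^ 2 / (3 * (1 - t) + t ^ 2)

section Field

variable {K : Type*} [Field K]

theorem alphaForm_zero : alphaForm (0 : K) = 0 := by
  simp [alphaForm]

theorem alphaForm_one : alphaForm (1 : K) = 1 := by
  simp [alphaForm]

theorem alphaForm_div (q : K) {p : K} (hp : p ≠ 0) :
    alphaForm (q / p) = q ^ 2 / (3 * p * (p - q) + q ^ 2) := by
  have denominator_eq :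
      3 * (1 - q / p) + (q / p) ^ 2 = (3 * p * (p - q) + q ^ 2) / p ^ 2 := by
    field_simp
  rw [alphaForm, denominator_eq, div_pow, div_div_div_cancel_right₀ (pow_ne_zero 2 hp)]

theorem alphaForm_ratCast [CharZero K] (r : ℚ) :
    alphaForm (r : K) =
      (r.num : K) ^ 2 / (3 * (r.den : K) * ((r.den : K) - (r.num : K)) + (r.num : K) ^ 2) := by
  rw [Rat.cast_def, alphaForm_div _ (Nat.cast_ne_zero.2 r.den_ne_zero)]

end Field

theorem alphaForm_denominator_pos {R : Type*} [CommRing R] [LinearOrder R] [IsStrictOrderedRing R]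
    (t : R) : 0 < 3 * (1 - t) + t ^ 2 := by
  nlinarith [sq_nonneg (2 * t - 3)]

theorem continuous_alphaForm {K : Type*} [Field K] [LinearOrder K] [IsStrictOrderedRing K]
    [TopologicalSpace K] [IsTopologicalDivisionRing K] : Continuous (alphaForm : K → K) :=
  Continuous.div (by fun_prop) (by fun_prop) fun t => (alphaForm_denominator_pos t).ne'

/-- The set `{ q²/(3p(p − q) + q²) : p, q ∈ ℤ, p > q ≥ 1 }` is dense in `[0, 1]`. -/
theorem alpha_form_dense_in_unit_interval :
    Set.Icc (0 : ℝ) 1 ⊆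
      closure {x : ℝ | ∃ p q : ℤ, p > q ∧ 1 ≤ q ∧
        x = (q : ℝ)^2 / (3 * (p : ℝ) * ((p : ℝ) - (q : ℝ)) + (q : ℝ)^2)} := by
  have Icc_subset_closure_image :
      Icc (0 : ℝ) 1 ⊆ closure (alphaForm '' (Ioo 0 1 ∩ range Rat.cast)) := by
    simpa only [alphaForm_zero, alphaForm_one] using
      Icc_subset_closure_image_Ioo_inter_of_dense zero_lt_one
        (continuous_alphaForm (K := ℝ)).continuousOn Rat.denseRange_cast
  refine Icc_subset_closure_image.trans (closure_mono ?_)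
  rintro _ ⟨_, ⟨⟨r_pos, r_lt_one⟩, r, rfl⟩, rfl⟩
  have num_lt_den : r.num < r.den := Rat.num_lt_denom_iff.2 (by exact_mod_cast r_lt_one)
  have num_pos : 0 < r.num := Rat.num_pos.2 (by exact_mod_cast r_pos)
  exact ⟨r.den, r.num, num_lt_den, num_pos, by rw [Int.cast_natCast, alphaForm_ratCast]⟩
end

section
/- If β ≥ γ > 1, then there exists a constant C = C(β, γ) > 0 such that for all real numbers k₁ and k₂, Σ_{n ∈ ℤ} ⟨n − k₁⟩^{−β} ⟨n − k₂⟩^{−γ} ≤ C ⟨k₁ − k₂⟩^{−γ}. -/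
/-- The Japanese bracket `⟨x⟩ = (1 + x²)^{1/2}`. -/
noncomputable def jb (x : ℝ) : ℝ := Real.sqrt (1 + x^2)

/-!
Write `a = ⟨n - k₁⟩`, `b = ⟨n - k₂⟩` and `d = ⟨k₁ - k₂⟩`, so that `d ≤ a + b` and the larger of `a`
and `b` is at least `d / 2`. If it is `b`, then `b ^ (-γ) ≲ d ^ (-γ)`. If it is `a`, then `β ≥ γ`
allows the exponents to be exchanged, `a ^ (-β) * b ^ (-γ) ≤ b ^ (-β) * a ^ (-γ)`, and
`a ^ (-γ) ≲ d ^ (-γ)`. Either way the summand is `≲ d ^ (-γ) * (a ^ (-β) + b ^ (-β))`, and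
`∑ n, ⟨n - k⟩ ^ (-β)` is bounded uniformly in `k`, since moving `k` to its integer part changes each
bracket by a factor of at most `2`.
-/

section RealPowers

variable {a b c d β γ : ℝ}

lemma rpow_neg_le_of_le_mul (hγ : 0 ≤ γ) (hc : 0 < c) (hd : 0 < d) (h : d ≤ c * a) :
    a ^ (-γ) ≤ c ^ γ * d ^ (-γ) := by
  have hda : d / c ≤ a := (div_le_iff₀' hc).mpr h
  calc a ^ (-γ) ≤ (d / c) ^ (-γ) :=
        Real.rpow_le_rpow_of_nonpos (div_pos hd hc) hda (neg_nonpos.mpr hγ)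
    _ = c ^ γ * d ^ (-γ) := by
        rw [Real.div_rpow hd.le hc.le, Real.rpow_neg hc.le, div_inv_eq_mul, mul_comm]

lemma rpow_neg_mul_rpow_neg_le_swap (hb : 0 < b) (hba : b ≤ a) (hγβ : γ ≤ β) :
    a ^ (-β) * b ^ (-γ) ≤ b ^ (-β) * a ^ (-γ) := by
  have ha : 0 < a := hb.trans_le hba
  have hab : a ^ (γ - β) ≤ b ^ (γ - β) :=
    Real.rpow_le_rpow_of_nonpos hb hba (sub_nonpos.mpr hγβ)
  have split : -β = (γ - β) + -γ := by ring
  calc a ^ (-β) * b ^ (-γ) = a ^ (γ - β) * (a ^ (-γ) * b ^ (-γ)) := by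
        rw [split, Real.rpow_add ha, mul_assoc]
    _ ≤ b ^ (γ - β) * (a ^ (-γ) * b ^ (-γ)) := by gcongr
    _ = b ^ (-β) * a ^ (-γ) := by
        rw [split, Real.rpow_add hb]; ring

lemma rpow_neg_mul_rpow_neg_le_of_le_add (ha : 0 < a) (hb : 0 < b) (hd : 0 < d) (h : d ≤ a + b)
    (hγ : 0 ≤ γ) (hγβ : γ ≤ β) :
    a ^ (-β) * b ^ (-γ) ≤ 2 ^ γ * d ^ (-γ) * (a ^ (-β) + b ^ (-β)) := by
  rcases le_total a b with hab | hba
  · have hbd : b ^ (-γ) ≤ 2 ^ γ * d ^ (-γ) :=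
      rpow_neg_le_of_le_mul hγ two_pos hd (by linarith)
    calc a ^ (-β) * b ^ (-γ) ≤ a ^ (-β) * (2 ^ γ * d ^ (-γ)) := by gcongr
      _ = 2 ^ γ * d ^ (-γ) * a ^ (-β) := mul_comm _ _
      _ ≤ 2 ^ γ * d ^ (-γ) * (a ^ (-β) + b ^ (-β)) := by
        gcongr; exact le_add_of_nonneg_right (by positivity)
  · have had : a ^ (-γ) ≤ 2 ^ γ * d ^ (-γ) :=
      rpow_neg_le_of_le_mul hγ two_pos hd (by linarith)
    calc a ^ (-β) * b ^ (-γ) ≤ b ^ (-β) * a ^ (-γ) :=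
        rpow_neg_mul_rpow_neg_le_swap hb hba hγβ
      _ ≤ b ^ (-β) * (2 ^ γ * d ^ (-γ)) := by gcongr
      _ = 2 ^ γ * d ^ (-γ) * b ^ (-β) := mul_comm _ _
      _ ≤ 2 ^ γ * d ^ (-γ) * (a ^ (-β) + b ^ (-β)) := by
        gcongr; exact le_add_of_nonneg_left (by positivity)

end RealPowers

section Bracket

lemma one_le_jb (x : ℝ) : 1 ≤ jb x :=
  Real.one_le_sqrt.mpr (le_add_of_nonneg_right (sq_nonneg x))

lemma jb_pos (x : ℝ) : 0 < jb x := one_pos.trans_le (one_le_jb x)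

lemma jb_rpow_pos (x s : ℝ) : 0 < jb x ^ s := Real.rpow_pos_of_pos (jb_pos x) s

lemma jb_sq (x : ℝ) : jb x ^ 2 = 1 + x ^ 2 := Real.sq_sqrt (by positivity)

lemma abs_le_jb (x : ℝ) : |x| ≤ jb x := Real.abs_le_sqrt (le_add_of_nonneg_left zero_le_one)

lemma jb_add_le_jb_add_abs (x y : ℝ) : jb (x + y) ≤ jb x + |y| := by
  have hxy : x * y ≤ jb x * |y| :=
    calc x * y ≤ |x| * |y| := (le_abs_self _).trans (abs_mul x y).le
      _ ≤ jb x * |y| := by gcongr; exact abs_le_jb x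
  refine Real.sqrt_le_iff.mpr ⟨add_nonneg (jb_pos x).le (abs_nonneg y), ?_⟩
  rw [add_sq (jb x), jb_sq, sq_abs]
  linarith

lemma jb_sub_le_jb_add_jb (x y : ℝ) : jb (x - y) ≤ jb x + jb y := by
  have h := jb_add_le_jb_add_abs x (-y)
  rw [← sub_eq_add_neg, abs_neg] at h
  exact h.trans (by gcongr; exact abs_le_jb y)

lemma jb_le_two_mul_jb {x y : ℝ} (h : |x - y| ≤ 1) : jb x ≤ 2 * jb y :=
  calc jb x = jb (y + (x - y)) := by rw [add_sub_cancel]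
    _ ≤ jb y + |x - y| := jb_add_le_jb_add_abs _ _
    _ ≤ 2 * jb y := by linarith [one_le_jb y]

lemma jb_sub_rpow_neg_mul_jb_sub_rpow_neg_le {β γ : ℝ} (hγ : 0 ≤ γ) (hγβ : γ ≤ β)
    (x k₁ k₂ : ℝ) :
    jb (x - k₁) ^ (-β) * jb (x - k₂) ^ (-γ) ≤
      2 ^ γ * jb (k₁ - k₂) ^ (-γ) * (jb (x - k₁) ^ (-β) + jb (x - k₂) ^ (-β)) := by
  have triangle : jb (k₁ - k₂) ≤ jb (x - k₁) + jb (x - k₂) := by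
    have h := jb_sub_le_jb_add_jb (x - k₂) (x - k₁)
    rwa [sub_sub_sub_cancel_left, add_comm] at h
  exact rpow_neg_mul_rpow_neg_le_of_le_add (jb_pos _) (jb_pos _) (jb_pos _) triangle hγ hγβ

end Bracket

section LatticeSums

variable {β : ℝ}

lemma summable_jb_intCast_rpow_neg (hβ : 1 < β) :
    Summable fun n : ℤ => jb (n : ℝ) ^ (-β) := by
  apply Summable.of_norm_bounded_eventually (Real.summable_abs_int_rpow hβ)
  filter_upwards [(Set.finite_singleton (0 : ℤ)).compl_mem_cofinite] with n hn
  have hn_abs : 0 < |(n : ℝ)| := abs_pos.mpr (Int.cast_ne_zero.mpr hn)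
  rw [Real.norm_of_nonneg (jb_rpow_pos _ _).le]
  exact Real.rpow_le_rpow_of_nonpos hn_abs (abs_le_jb _) (by linarith)

lemma jb_intCast_sub_rpow_neg_le (hβ : 0 ≤ β) (k : ℝ) (n : ℤ) :
    jb (n - k) ^ (-β) ≤ 2 ^ β * jb ((n - ⌊k⌋ : ℤ) : ℝ) ^ (-β) := by
  have close : |((n - ⌊k⌋ : ℤ) : ℝ) - (n - k)| ≤ 1 := by
    rw [Int.cast_sub, sub_sub_sub_cancel_left, Int.self_sub_floor, Int.abs_fract]
    exact (Int.fract_lt_one k).le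
  exact rpow_neg_le_of_le_mul hβ two_pos (jb_pos _) (jb_le_two_mul_jb close)

lemma summable_jb_intCast_sub_rpow_neg (hβ : 1 < β) (k : ℝ) :
    Summable fun n : ℤ => jb (n - k) ^ (-β) :=
  .of_nonneg_of_le (fun _ => (jb_rpow_pos _ _).le)
    (jb_intCast_sub_rpow_neg_le (by linarith) k)
    (((Equiv.subRight ⌊k⌋).summable_iff.mpr (summable_jb_intCast_rpow_neg hβ)).mul_left _)

lemma tsum_jb_intCast_sub_rpow_neg_le (hβ : 1 < β) (k : ℝ) :
    ∑' n : ℤ, jb (n - k) ^ (-β) ≤ 2 ^ β * ∑' n : ℤ, jb (n : ℝ) ^ (-β) := by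
  rw [← (Equiv.subRight ⌊k⌋).tsum_eq fun n : ℤ => jb (n : ℝ) ^ (-β), ← tsum_mul_left]
  exact (summable_jb_intCast_sub_rpow_neg hβ k).tsum_le_tsum
    (jb_intCast_sub_rpow_neg_le (by linarith) k)
    (((Equiv.subRight ⌊k⌋).summable_iff.mpr (summable_jb_intCast_rpow_neg hβ)).mul_left _)

end LatticeSums

theorem sum_bracket_convolution_general {β γ : ℝ} (hβ : 1 < β) (hγ : 0 ≤ γ) (hγβ : γ ≤ β) :
    ∃ C > 0, ∀ k₁ k₂ : ℝ,
      Summable (fun n : ℤ => jb (n - k₁) ^ (-β) * jb (n - k₂) ^ (-γ)) ∧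
      ∑' n : ℤ, jb (n - k₁) ^ (-β) * jb (n - k₂) ^ (-γ) ≤ C * jb (k₁ - k₂) ^ (-γ) := by
  set S := ∑' n : ℤ, jb (n : ℝ) ^ (-β)
  have hS : 0 < S := (summable_jb_intCast_rpow_neg hβ).tsum_pos
    (fun _ => (jb_rpow_pos _ _).le) 0 (jb_rpow_pos _ _)
  refine ⟨2 ^ γ * (2 ^ β * S + 2 ^ β * S), by positivity, fun k₁ k₂ => ?_⟩
  have hd := jb_rpow_pos (k₁ - k₂) (-γ)
  have hs₁ := summable_jb_intCast_sub_rpow_neg hβ k₁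
  have hs₂ := summable_jb_intCast_sub_rpow_neg hβ k₂
  have pointwise := fun n : ℤ => jb_sub_rpow_neg_mul_jb_sub_rpow_neg_le hγ hγβ n k₁ k₂
  have majorant := (hs₁.add hs₂).mul_left (2 ^ γ * jb (k₁ - k₂) ^ (-γ))
  have summable : Summable fun n : ℤ => jb (n - k₁) ^ (-β) * jb (n - k₂) ^ (-γ) :=
    .of_nonneg_of_le (fun _ => (mul_pos (jb_rpow_pos _ _) (jb_rpow_pos _ _)).le)
      pointwise majorant
  refine ⟨summable, ?_⟩
  calc ∑' n : ℤ, jb (n - k₁) ^ (-β) * jb (n - k₂) ^ (-γ)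
      ≤ ∑' n : ℤ, 2 ^ γ * jb (k₁ - k₂) ^ (-γ) * (jb (n - k₁) ^ (-β) + jb (n - k₂) ^ (-β)) :=
        summable.tsum_le_tsum pointwise majorant
    _ = 2 ^ γ * jb (k₁ - k₂) ^ (-γ) *
          (∑' n : ℤ, jb (n - k₁) ^ (-β) + ∑' n : ℤ, jb (n - k₂) ^ (-β)) := by
        rw [tsum_mul_left, hs₁.tsum_add hs₂]
    _ ≤ 2 ^ γ * jb (k₁ - k₂) ^ (-γ) * (2 ^ β * S + 2 ^ β * S) := by
        gcongr <;> exact tsum_jb_intCast_sub_rpow_neg_le hβ _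
    _ = 2 ^ γ * (2 ^ β * S + 2 ^ β * S) * jb (k₁ - k₂) ^ (-γ) := mul_right_comm _ _ _

/-- If `β ≥ γ > 1`, there is a constant `C = C(β, γ) > 0` such that for all real `k₁, k₂`,
`Σ_{n ∈ ℤ} ⟨n − k₁⟩^{−β} ⟨n − k₂⟩^{−γ} ≤ C ⟨k₁ − k₂⟩^{−γ}`. -/
theorem sum_bracket_convolution (β γ : ℝ) (hβγ : β ≥ γ) (hγ : 1 < γ) :
    ∃ C > 0, ∀ k₁ k₂ : ℝ,
      Summable (fun n : ℤ => jb ((n : ℝ) - k₁) ^ (-β) * jb ((n : ℝ) - k₂) ^ (-γ)) ∧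
      (∑' n : ℤ, jb ((n : ℝ) - k₁) ^ (-β) * jb ((n : ℝ) - k₂) ^ (-γ))
        ≤ C * jb (k₁ - k₂) ^ (-γ) :=
  sum_bracket_convolution_general (hγ.trans_le hβγ) (zero_le_one.trans hγ.le) hβγ
end

section
/- For every γ > 0, every s ∈ ℝ, and every sequence w : ℤ → ℂ with w₀ = 0, one has Σ_{k ∈ ℤ} ⟨k⟩^{2(s+1)} |w_k|² / (γ² + k⁶) ≤ 2 γ^{−4/3} Σ_{k ∈ ℤ} ⟨k⟩^{2s} |w_k|². Equivalently, the Fourier multiplier operator M₁ : w_k ↦ w_k/(γ − ik³) satisfies ‖M₁ w‖_{H^{s+1}} ≤ √2 · γ^{−2/3} ‖w‖_{H^s} on mean-zero sequences. -/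
lemma jb_rpow_two_mul_add_one (x s : ℝ) :
    jb x ^ (2 * (s + 1)) = jb x ^ (2 * s) * (1 + x ^ 2) := by
  rw [mul_add, mul_one, Real.rpow_add (jb_pos x), Real.rpow_two, jb_sq]

lemma rpow_mul_rpow_le_add_of_add_eq_one {a b p q : ℝ} (ha : 0 ≤ a) (hb : 0 ≤ b) (hp : 0 ≤ p)
    (hq : 0 ≤ q) (hpq : p + q = 1) : a ^ p * b ^ q ≤ a + b :=
  calc a ^ p * b ^ q
    _ ≤ p * a + q * b := Real.geom_mean_le_arith_mean2_weighted hp hq ha hb hpq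
    _ ≤ a + b :=
      add_le_add (mul_le_of_le_one_left ha (by linarith)) (mul_le_of_le_one_left hb (by linarith))

lemma rpow_four_thirds_mul_sq_le_sq_add_pow_six {γ : ℝ} (hγ : 0 ≤ γ) (x : ℝ) :
    γ ^ (4 / 3 : ℝ) * x ^ 2 ≤ γ ^ 2 + x ^ 6 := by
  have hγ_pow : (γ ^ 2) ^ (2 / 3 : ℝ) = γ ^ (4 / 3 : ℝ) := by
    rw [← Real.rpow_natCast_mul hγ]
    norm_num
  have hx_pow : (x ^ 6) ^ (1 / 3 : ℝ) = x ^ 2 := by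
    rw [one_div, show x ^ 6 = (x ^ 2) ^ 3 by ring]
    exact Real.pow_rpow_inv_natCast (sq_nonneg x) three_ne_zero
  rw [← hγ_pow, ← hx_pow]
  exact rpow_mul_rpow_le_add_of_add_eq_one (by positivity) (by positivity) (by norm_num)
    (by norm_num) (by norm_num)

lemma one_add_sq_div_sq_add_pow_six_le {γ x : ℝ} (hγ : 0 < γ) (hx : 1 ≤ |x|) :
    (1 + x ^ 2) / (γ ^ 2 + x ^ 6) ≤ 2 * γ ^ (-(4 : ℝ) / 3) := by
  have hx_sq : 1 ≤ x ^ 2 := (one_le_sq_iff_one_le_abs x).mpr hx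
  rw [div_le_iff₀ (by positivity)]
  calc 1 + x ^ 2
    _ ≤ 2 * x ^ 2 := by linarith
    _ = 2 * γ ^ (-(4 : ℝ) / 3) * (γ ^ (4 / 3 : ℝ) * x ^ 2) := by
      rw [neg_div, Real.rpow_neg hγ.le]
      field_simp
    _ ≤ 2 * γ ^ (-(4 : ℝ) / 3) * (γ ^ 2 + x ^ 6) := by
      gcongr
      exact rpow_four_thirds_mul_sq_le_sq_add_pow_six hγ.le x

lemma jb_rpow_mul_div_le {γ x c : ℝ} (hγ : 0 < γ) (s : ℝ) (hx : 1 ≤ |x|) (hc : 0 ≤ c) :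
    jb x ^ (2 * (s + 1)) * c / (γ ^ 2 + x ^ 6)
      ≤ 2 * γ ^ (-(4 : ℝ) / 3) * (jb x ^ (2 * s) * c) :=
  have hweight : 0 ≤ jb x ^ (2 * s) * c := mul_nonneg (Real.rpow_nonneg (jb_pos x).le _) hc
  calc jb x ^ (2 * (s + 1)) * c / (γ ^ 2 + x ^ 6)
    _ = (1 + x ^ 2) / (γ ^ 2 + x ^ 6) * (jb x ^ (2 * s) * c) := by
      rw [jb_rpow_two_mul_add_one]
      ring
    _ ≤ 2 * γ ^ (-(4 : ℝ) / 3) * (jb x ^ (2 * s) * c) :=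
      mul_le_mul_of_nonneg_right (one_add_sq_div_sq_add_pow_six_le hγ hx) hweight

theorem M1_gain_one_derivative_general {ι E : Type*} [SeminormedAddCommGroup E] {γ : ℝ}
    (hγ : 0 < γ) (s : ℝ) (ξ : ι → ℝ) (w : ι → E) (hlow : ∀ i, |ξ i| < 1 → w i = 0)
    (hw : Summable (fun i ↦ jb (ξ i) ^ (2 * s) * ‖w i‖ ^ 2)) :
    Summable (fun i ↦ jb (ξ i) ^ (2 * (s + 1)) * ‖w i‖ ^ 2 / (γ ^ 2 + ξ i ^ 6)) ∧
    (∑' i, jb (ξ i) ^ (2 * (s + 1)) * ‖w i‖ ^ 2 / (γ ^ 2 + ξ i ^ 6))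
      ≤ 2 * γ ^ (-(4 : ℝ) / 3) * ∑' i, jb (ξ i) ^ (2 * s) * ‖w i‖ ^ 2 := by
  have hnonneg (i : ι) : 0 ≤ jb (ξ i) ^ (2 * (s + 1)) * ‖w i‖ ^ 2 / (γ ^ 2 + ξ i ^ 6) := by
    have := jb_pos (ξ i)
    positivity
  have hle (i : ι) : jb (ξ i) ^ (2 * (s + 1)) * ‖w i‖ ^ 2 / (γ ^ 2 + ξ i ^ 6)
      ≤ 2 * γ ^ (-(4 : ℝ) / 3) * (jb (ξ i) ^ (2 * s) * ‖w i‖ ^ 2) := by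
    rcases lt_or_ge |ξ i| 1 with hsmall | hlarge
    · simp [hlow i hsmall]
    · exact jb_rpow_mul_div_le hγ s hlarge (sq_nonneg _)
  have hbound := hw.mul_left (2 * γ ^ (-(4 : ℝ) / 3))
  have hsum := hbound.of_nonneg_of_le hnonneg hle
  refine ⟨hsum, ?_⟩
  rw [← tsum_mul_left]
  exact hsum.tsum_le_tsum hle hbound

/-- For `γ > 0`, `s ∈ ℝ`, and any mean-zero sequence `w : ℤ → ℂ` (i.e. `w₀ = 0`),
`Σ_k ⟨k⟩^{2(s+1)} |w_k|²/(γ² + k⁶) ≤ 2 γ^{−4/3} Σ_k ⟨k⟩^{2s} |w_k|²`: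
the multiplier `M₁ : w_k ↦ w_k/(γ − ik³)` gains one derivative with constant `√2·γ^{−2/3}`. -/
theorem M1_gain_one_derivative (γ s : ℝ) (hγ : 0 < γ) (w : ℤ → ℂ) (h0 : w 0 = 0)
    (hw : Summable (fun k : ℤ => jb (k : ℝ) ^ (2 * s) * ‖w k‖^2)) :
    Summable (fun k : ℤ => jb (k : ℝ) ^ (2 * (s + 1)) * ‖w k‖^2 / (γ^2 + (k : ℝ)^6)) ∧
    (∑' k : ℤ, jb (k : ℝ) ^ (2 * (s + 1)) * ‖w k‖^2 / (γ^2 + (k : ℝ)^6))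
      ≤ 2 * γ ^ (-(4 : ℝ)/3) * ∑' k : ℤ, jb (k : ℝ) ^ (2 * s) * ‖w k‖^2 := by
  refine M1_gain_one_derivative_general hγ s (fun k : ℤ ↦ (k : ℝ)) w (fun k hk ↦ ?_) hw
  rwa [show k = 0 from Int.abs_lt_one_iff.mp (mod_cast hk)]
end

section
/- Let α ∈ (0,1). For all real numbers k and x with |x − c₁k| ≥ 1/2 and |x − c₂k| ≥ 1/2, one has |k³ − αx³ − α(k − x)³| ≥ (3α(c₁ − c₂)/4) · k². -/
/-- The smaller root `c₂ = 1/2 − √(12/α − 3)/6` of `3αx² − 3αx + (α − 1)`. -/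
noncomputable def c2 (α : ℝ) : ℝ := 1/2 - Real.sqrt (12/α - 3)/6

/-!
The resonance function factors as `-3αk(x - c₁k)(x - c₂k)`. The last two factors differ by
`(c₁ - c₂)k`, so the larger one is at least `(c₁ - c₂)|k|/2` in absolute value, while the
separation hypotheses bound the smaller one from below.
-/

section OrderedRing

variable {R : Type*} [CommRing R]

theorem cube_sub_mul_cube_sub_mul_cube_eq_of_vieta {α a b : R} (hadd : a + b = 1)
    (hmul : 3 * α * (a * b) = α - 1) (k x : R) :
    k ^ 3 - α * x ^ 3 - α * (k - x) ^ 3 = -(3 * α * k * ((x - a * k) * (x - b * k))) := by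
  linear_combination -3 * α * k ^ 2 * x * hadd + k ^ 3 * hmul

variable [LinearOrder R] [IsOrderedRing R]

theorem min_abs_mul_abs_sub_le_two_mul_abs_mul (u v : R) :
    min |u| |v| * |u - v| ≤ 2 * |u * v| := by
  calc
    min |u| |v| * |u - v| ≤ min |u| |v| * (|u| + |v|) := by
      gcongr
      exact abs_sub u v
    _ = min |u| |v| * |u| + min |u| |v| * |v| := mul_add ..
    _ ≤ |v| * |u| + |u| * |v| := by
      gcongr
      · exact min_le_right _ _
      · exact min_le_left _ _
    _ = 2 * |u * v| := by rw [abs_mul]; ring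

theorem mul_sq_le_two_mul_abs_cube_sub_of_vieta {α a b δ k x : R} (hadd : a + b = 1)
    (hmul : 3 * α * (a * b) = α - 1) (ha : δ ≤ |x - a * k|) (hb : δ ≤ |x - b * k|) :
    3 * |α| * |a - b| * δ * k ^ 2 ≤ 2 * |k ^ 3 - α * x ^ 3 - α * (k - x) ^ 3| := by
  have abs_sub_factors : |(x - a * k) - (x - b * k)| = |a - b| * |k| := by
    rw [abs_sub_comm, sub_sub_sub_cancel_left, ← sub_mul, abs_mul]
  have product_bound : δ * (|a - b| * |k|) ≤ 2 * |(x - a * k) * (x - b * k)| := by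
    rw [← abs_sub_factors]
    exact (mul_le_mul_of_nonneg_right (le_min ha hb) (abs_nonneg _)).trans
      (min_abs_mul_abs_sub_le_two_mul_abs_mul _ _)
  have coefficient_nonneg : 0 ≤ 3 * |α| * |k| :=
    mul_nonneg (mul_nonneg zero_le_three (abs_nonneg α)) (abs_nonneg k)
  calc
    3 * |α| * |a - b| * δ * k ^ 2 = 3 * |α| * |k| * (δ * (|a - b| * |k|)) := by
      rw [← sq_abs k]; ring
    _ ≤ 3 * |α| * |k| * (2 * |(x - a * k) * (x - b * k)|) :=
      mul_le_mul_of_nonneg_left product_bound coefficient_nonneg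
    _ = 2 * |k ^ 3 - α * x ^ 3 - α * (k - x) ^ 3| := by
      rw [cube_sub_mul_cube_sub_mul_cube_eq_of_vieta hadd hmul, abs_neg, abs_mul (3 * α * k),
        abs_mul (3 * α), abs_mul 3, Nat.abs_ofNat]
      ring

end OrderedRing

theorem c1_add_c2 (α : ℝ) : c1 α + c2 α = 1 := by
  unfold c1 c2
  ring

theorem c2_le_c1 (α : ℝ) : c2 α ≤ c1 α := by
  unfold c1 c2
  linarith [Real.sqrt_nonneg (12 / α - 3)]

theorem three_mul_mul_c1_mul_c2 {α : ℝ} (hα : α ∈ Set.Ioc 0 4) :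
    3 * α * (c1 α * c2 α) = α - 1 := by
  obtain ⟨hpos, hle⟩ := hα
  have radicand_nonneg : 0 ≤ 12 / α - 3 := by
    rw [sub_nonneg, le_div_iff₀ hpos]
    linarith
  calc
    3 * α * (c1 α * c2 α) = 3 * α * (1 / 4 - √(12 / α - 3) ^ 2 / 36) := by
      unfold c1 c2
      ring
    _ = α - 1 := by
      rw [Real.sq_sqrt radicand_nonneg]
      field_simp
      ring

theorem resonance_lower_bound_c_general {α δ k x : ℝ} (hα : α ∈ Set.Ioc 0 4)
    (h1 : δ ≤ |x - c1 α * k|) (h2 : δ ≤ |x - c2 α * k|) :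
    3 * α * (c1 α - c2 α) / 2 * δ * k ^ 2 ≤ |k ^ 3 - α * x ^ 3 - α * (k - x) ^ 3| := by
  have bound := mul_sq_le_two_mul_abs_cube_sub_of_vieta (c1_add_c2 α)
    (three_mul_mul_c1_mul_c2 hα) h1 h2
  rw [abs_of_pos hα.1, abs_of_nonneg (sub_nonneg.2 (c2_le_c1 α))] at bound
  linarith

/-- For `α ∈ (0,1)` and real `k`, `x` with `|x − c₁k| ≥ 1/2` and `|x − c₂k| ≥ 1/2`, one has
`|k³ − αx³ − α(k − x)³| ≥ (3α(c₁ − c₂)/4)·k²`. -/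
theorem resonance_lower_bound_c (α : ℝ) (hα : α ∈ Set.Ioo (0:ℝ) 1) (k x : ℝ)
    (h1 : 1/2 ≤ |x - c1 α * k|) (h2 : 1/2 ≤ |x - c2 α * k|) :
    3 * α * (c1 α - c2 α) / 4 * k^2 ≤ |k^3 - α * x^3 - α * (k - x)^3| := by
  have hα4 : α ∈ Set.Ioc 0 4 := ⟨hα.1, by linarith [hα.2]⟩
  linarith [resonance_lower_bound_c_general hα4 h1 h2]
end
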